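/- Let K be a tetrahedron in ℝ³ with bubble function b_K (the product of the four barycentric coordinates), and for k = 1,2 let W_k(K) := ∇P_{k+1}(K) ⊕ x × P₁(K;ℝ³) ⊕ b_K·P₁(K;ℝ³). Then the kernel of the curl operator restricted to W_k(K) equals ∇P_{k+1}(K), i.e. W_k(K) ∩ ker(curl) = ∇P_{k+1}(K). -/

import Mathlib

open MeasureTheory
open scoped Classical

noncomputable section

/-! ### Basic vector calculus on ℝ³ -/

abbrev Vec : Type := Fin 3 → ℝ
abbrev Mat : Type := Fin 3 → Fin 3 → ℝ

/-- Euclidean dot product on ℝ³. -/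
def dot3 (v w : Vec) : ℝ := ∑ i, v i * w i
/-- squared Euclidean norm. -/
def nsq3 (v : Vec) : ℝ := dot3 v v
/-- Euclidean norm. -/
def enorm3 (v : Vec) : ℝ := Real.sqrt (dot3 v v)
/-- normalization to a unit vector. -/
def normalize3 (v : Vec) : Vec := (enorm3 v)⁻¹ • v
/-- cross product on ℝ³. -/
def cross3 (v w : Vec) : Vec :=
  ![v 1 * w 2 - v 2 * w 1, v 2 * w 0 - v 0 * w 2, v 0 * w 1 - v 1 * w 0]
/-- Frobenius inner product of 3×3 matrices. -/
def dotM (A B : Mat) : ℝ := ∑ i, ∑ j, A i j * B i j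
/-- squared Frobenius norm. -/
def nsqM (A : Mat) : ℝ := dotM A A

/-- partial derivative ∂ᵢ of a scalar field. -/
def pd (i : Fin 3) (f : Vec → ℝ) (x : Vec) : ℝ := fderiv ℝ f x (Pi.single i 1)
/-- gradient of a scalar field. -/
def grad3 (f : Vec → ℝ) (x : Vec) : Vec := fun i => pd i f x
/-- curl of a vector field. -/
def curl3 (v : Vec → Vec) (x : Vec) : Vec :=
  ![pd 1 (fun y => v y 2) x - pd 2 (fun y => v y 1) x,
    pd 2 (fun y => v y 0) x - pd 0 (fun y => v y 2) x,
    pd 0 (fun y => v y 1) x - pd 1 (fun y => v y 0) x]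
/-- divergence of a vector field. -/
def div3 (v : Vec → Vec) (x : Vec) : ℝ := ∑ i, pd i (fun y => v y i) x
/-- Jacobian matrix of a vector field. -/
def jac3 (v : Vec → Vec) (x : Vec) : Mat := fun i j => pd j (fun y => v y i) x
/-- application of a matrix to a vector (e.g. normal derivative ∂ₙ). -/
def japply (J : Mat) (n : Vec) : Vec := fun i => ∑ j, J i j * n j

/-- iterated partial derivatives along a list of directions. -/
def pdIter : List (Fin 3) → (Vec → ℝ) → Vec → ℝ
  | [], f => f
  | i :: l, f => pd i (pdIter l f)

/-- `f` is (the function of) a polynomial of total degree at most `k`. -/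
def PolyDeg (k : ℕ) (f : Vec → ℝ) : Prop :=
  ∃ p : MvPolynomial (Fin 3) ℝ, p.totalDegree ≤ k ∧ ∀ x, f x = MvPolynomial.eval x p
/-- vector-valued polynomial of total degree at most `k`. -/
def VPolyDeg (k : ℕ) (v : Vec → Vec) : Prop := ∀ i, PolyDeg k fun x => v x i

/-! ### Tetrahedra -/

/-- A (nondegenerate) tetrahedron in ℝ³, given by its four vertices. -/
structure Tetra where
  vtx : Fin 4 → Vec
  indep : AffineIndependent ℝ vtx

namespace Tetra

/-- the tetrahedron as a closed subset of ℝ³. -/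
def K (T : Tetra) : Set Vec := convexHull ℝ (Set.range T.vtx)
/-- the edge joining vertices `i`, `j`. -/
def edge (T : Tetra) (i j : Fin 4) : Set Vec := segment ℝ (T.vtx i) (T.vtx j)
/-- a unit tangent vector of the edge joining vertices `i`, `j`. -/
def tangent (T : Tetra) (i j : Fin 4) : Vec := normalize3 (T.vtx j - T.vtx i)
/-- the face opposite to vertex `i`. -/
def face (T : Tetra) (i : Fin 4) : Set Vec := convexHull ℝ (T.vtx '' {j | j ≠ i})
/-- unit outward normal of the face opposite to vertex `i`. -/
def outNormal (T : Tetra) (i : Fin 4) : Vec :=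
  let a := T.vtx (i.succAbove 0)
  let u := cross3 (T.vtx (i.succAbove 1) - a) (T.vtx (i.succAbove 2) - a)
  (if 0 < dot3 u (T.vtx i - a) then (-1 : ℝ) else 1) • normalize3 u

/-- `lam` is the family of barycentric coordinates of `T`. -/
def IsBary (T : Tetra) (lam : Fin 4 → Vec → ℝ) : Prop :=
  (∀ i, PolyDeg 1 (lam i)) ∧ ∀ i j, lam i (T.vtx j) = if i = j then (1 : ℝ) else 0
/-- `b` is the (quartic) bubble function of `T`. -/
def IsBubble (T : Tetra) (b : Vec → ℝ) : Prop :=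
  ∃ lam, T.IsBary lam ∧ ∀ x, b x = ∏ i, lam i x

end Tetra

/-! ### Local shape function spaces -/

/-- the local space `W_k(K) = ∇P_{k+1}(K) ⊕ x × P₁(K;ℝ³) ⊕ b_K P₁(K;ℝ³)`. -/
def MemW (k : ℕ) (T : Tetra) (v : Vec → Vec) : Prop :=
  ∃ (q : Vec → ℝ) (p r : Vec → Vec) (b : Vec → ℝ), T.IsBubble b ∧
    PolyDeg (k + 1) q ∧ VPolyDeg 1 p ∧ VPolyDeg 1 r ∧
    ∀ x, v x = grad3 q x + cross3 x (p x) + b x • r x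

/-- the local Tai–Winther space `V^d(K) = P₁(K;ℝ³) ⊕ curl(b_K P₁(K;ℝ³))`. -/
def MemVd (T : Tetra) (v : Vec → Vec) : Prop :=
  ∃ (p r : Vec → Vec) (b : Vec → ℝ), T.IsBubble b ∧ VPolyDeg 1 p ∧ VPolyDeg 1 r ∧
    ∀ x, v x = p x + curl3 (fun y => b y • r y) x

/-- the local Nédélec space `V_k^{ND}(K) = ∇P_{k+1}(K) ⊕ x × P₁(K;ℝ³)`, `k = 1,2`. -/
def MemND (k : ℕ) (v : Vec → Vec) : Prop :=
  ∃ (q : Vec → ℝ) (p : Vec → Vec), PolyDeg (k + 1) q ∧ VPolyDeg 1 p ∧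
    ∀ x, v x = grad3 q x + cross3 x (p x)

/-- the face test space `RM_{k-2}(F) = P₀(F;ℝ²) ⊕ x^⊥ P_{k-2}(F)` on the face with
unit normal `n`; for `k = 1` this is just `P₀(F;ℝ²)`. -/
def MemRM (k : ℕ) (n : Vec) (q : Vec → Vec) : Prop :=
  ∃ (a : Vec) (c : ℝ), dot3 a n = 0 ∧ (k ≤ 1 → c = 0) ∧ ∀ x, q x = a + c • cross3 n x

/-- the face test space `RT(F) = P₀(F;ℝ²) ⊕ x P₀(F)` on the face with unit normal `n`. -/
def MemRT (n : Vec) (q : Vec → Vec) : Prop :=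
  ∃ (a : Vec) (c : ℝ), dot3 a n = 0 ∧ ∀ x, q x = a + c • (x - dot3 x n • n)

/-! ### Degrees of freedom -/

/-- edge moment `∫_e (v⋅t) q ds`. -/
def edgeMoment (T : Tetra) (a b : Fin 4) (v : Vec → Vec) (q : Vec → ℝ) : ℝ :=
  ∫ x in T.edge a b, dot3 (v x) (T.tangent a b) * q x ∂μH[1]
/-- tangential face moment `∫_F (v × n)⋅q dS`. -/
def faceTanMoment (T : Tetra) (a : Fin 4) (v : Vec → Vec) (q : Vec → Vec) : ℝ :=
  ∫ x in T.face a, dot3 (cross3 (v x) (T.outNormal a)) (q x) ∂μH[2]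
/-- normal face moment `∫_F (v⋅n) q dS`. -/
def faceNorMoment (T : Tetra) (a : Fin 4) (v : Vec → Vec) (q : Vec → ℝ) : ℝ :=
  ∫ x in T.face a, dot3 (v x) (T.outNormal a) * q x ∂μH[2]
/-- surface integral over a face. -/
def faceInt2 (T : Tetra) (a : Fin 4) (g : Vec → ℝ) : ℝ := ∫ x in T.face a, g x ∂μH[2]
/-- diameter of a face. -/
def hF (T : Tetra) (a : Fin 4) : ℝ := Metric.diam (T.face a)

/-! ### Meshes -/

/-- A face-to-face tetrahedral mesh. -/
structure Mesh where
  n : ℕ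
  npos : 0 < n
  el : Fin n → Tetra
  disj : ∀ i j, i ≠ j → interior (el i).K ∩ interior (el j).K = ∅
  conform : ∀ i j, i ≠ j → ∃ s e : Set (Fin 4),
    (el i).vtx '' s = (el j).vtx '' e ∧ (el i).K ∩ (el j).K = convexHull ℝ ((el i).vtx '' s)

namespace Mesh
/-- the open domain triangulated by the mesh. -/
def domain (M : Mesh) : Set Vec := interior (⋃ i, (M.el i).K)
/-- the mesh triangulates the (connected, polyhedral) domain `Ω`. -/
def Covers (M : Mesh) (Ω : Set Vec) : Prop :=
  Ω = M.domain ∧ closure Ω = (⋃ i, (M.el i).K) ∧ IsConnected Ω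
/-- the mesh size `h`. -/
def hsize (M : Mesh) : ℝ := ⨆ i, Metric.diam (M.el i).K
/-- shape regularity with constant `ρ`. -/
def ShapeReg (ρ : ℝ) (M : Mesh) : Prop :=
  ∀ i, ∃ x, Metric.ball x (ρ * Metric.diam (M.el i).K) ⊆ (M.el i).K
end Mesh

/-- A bounded polyhedral domain: a connected open set triangulated by some tetrahedral mesh. -/
def PolyhedralDomain (Ω : Set Vec) : Prop := ∃ M : Mesh, M.Covers Ω

/-- piecewise vector fields on a mesh (one smooth representative per element). -/
abbrev DiscVF (M : Mesh) := Fin M.n → Vec → Vec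
/-- piecewise scalar fields on a mesh. -/
abbrev DiscSF (M : Mesh) := Fin M.n → Vec → ℝ

/-- elementwise average (the `L²`-projection onto piecewise constants). -/
def avg (M : Mesh) (g : Vec → ℝ) (i : Fin M.n) : ℝ :=
  (∫ x in (M.el i).K, g x) / (volume (M.el i).K).toReal

/-! ### Global finite element spaces -/

/-- the `H(grad curl)`-nonconforming space `W_h`: piecewise `W_k(K)`, all DoFs
single-valued, and the edge DoFs and `RM`-face DoFs vanishing on `∂Ω`. -/
def MemWh (k : ℕ) (M : Mesh) (Ω : Set Vec) (u : DiscVF M) : Prop :=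
  (∀ i, MemW k (M.el i) (u i)) ∧
  (∀ i j a b c d, i ≠ j → (M.el i).edge a b = (M.el j).edge c d →
     ∀ q, PolyDeg k q → edgeMoment (M.el i) a b (u i) q = edgeMoment (M.el i) a b (u j) q) ∧
  (∀ i j a b, i ≠ j → (M.el i).face a = (M.el j).face b →
     ∀ q, MemRM k ((M.el i).outNormal a) q →
       faceTanMoment (M.el i) a (u i) q = faceTanMoment (M.el i) a (u j) q) ∧
  (∀ i j a b, i ≠ j → (M.el i).face a = (M.el j).face b →
     ∀ q, MemRT ((M.el i).outNormal a) q →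
       faceTanMoment (M.el i) a (curl3 (u i)) q = faceTanMoment (M.el i) a (curl3 (u j)) q) ∧
  (∀ i a b, (M.el i).edge a b ⊆ frontier Ω →
     ∀ q, PolyDeg k q → edgeMoment (M.el i) a b (u i) q = 0) ∧
  (∀ i a, (M.el i).face a ⊆ frontier Ω →
     ∀ q, MemRM k ((M.el i).outNormal a) q → faceTanMoment (M.el i) a (u i) q = 0)

/-- the space `W_{h0}`: all DoFs, including the curl-trace face DoFs, vanish on `∂Ω`. -/
def MemWh0 (k : ℕ) (M : Mesh) (Ω : Set Vec) (u : DiscVF M) : Prop :=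
  MemWh k M Ω u ∧
  ∀ i a, (M.el i).face a ⊆ frontier Ω →
    ∀ q, MemRT ((M.el i).outNormal a) q → faceTanMoment (M.el i) a (curl3 (u i)) q = 0

/-- the degree-`(k+1)` Lagrange space with zero boundary trace. -/
def MemVhg (k : ℕ) (M : Mesh) (Ω : Set Vec) (u : DiscSF M) : Prop :=
  (∀ i, PolyDeg (k + 1) (u i)) ∧
  (∀ i j, ∀ x ∈ (M.el i).K ∩ (M.el j).K, u i x = u j x) ∧
  (∀ i, ∀ x ∈ (M.el i).K ∩ frontier Ω, u i x = 0)

/-- the Tai–Winther space `V_h^d`: normal components continuous, tangential `RT`-moments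
single-valued, normal DoFs vanishing on `∂Ω`. -/
def MemVhd (M : Mesh) (Ω : Set Vec) (u : DiscVF M) : Prop :=
  (∀ i, MemVd (M.el i) (u i)) ∧
  (∀ i j a b, i ≠ j → (M.el i).face a = (M.el j).face b →
     (∀ q, PolyDeg 1 q → faceNorMoment (M.el i) a (u i) q = faceNorMoment (M.el i) a (u j) q) ∧
     (∀ q, MemRT ((M.el i).outNormal a) q →
       faceTanMoment (M.el i) a (u i) q = faceTanMoment (M.el i) a (u j) q)) ∧
  (∀ i a, (M.el i).face a ⊆ frontier Ω →
     ∀ q, PolyDeg 1 q → faceNorMoment (M.el i) a (u i) q = 0)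

/-- the Tai–Winther space `V_{h0}^d` with all DoFs vanishing on `∂Ω`. -/
def MemVh0d (M : Mesh) (Ω : Set Vec) (u : DiscVF M) : Prop :=
  MemVhd M Ω u ∧
  ∀ i a, (M.el i).face a ⊆ frontier Ω →
    ∀ q, MemRT ((M.el i).outNormal a) q → faceTanMoment (M.el i) a (u i) q = 0

/-- the piecewise-constant space `𝒬_h` with zero mean. -/
def MemQh (M : Mesh) (q : Fin M.n → ℝ) : Prop :=
  ∑ i, q i * (volume (M.el i).K).toReal = 0

/-- the Nédélec space with vanishing tangential boundary DoFs. -/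
def MemVND (k : ℕ) (M : Mesh) (Ω : Set Vec) (u : DiscVF M) : Prop :=
  (∀ i, MemND k (u i)) ∧
  (∀ i j a b c d, i ≠ j → (M.el i).edge a b = (M.el j).edge c d →
     ∀ q, PolyDeg k q → edgeMoment (M.el i) a b (u i) q = edgeMoment (M.el i) a b (u j) q) ∧
  (∀ i j a b, i ≠ j → (M.el i).face a = (M.el j).face b →
     ∀ q, MemRM k ((M.el i).outNormal a) q →
       faceTanMoment (M.el i) a (u i) q = faceTanMoment (M.el i) a (u j) q) ∧
  (∀ i a b, (M.el i).edge a b ⊆ frontier Ω →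
     ∀ q, PolyDeg k q → edgeMoment (M.el i) a b (u i) q = 0) ∧
  (∀ i a, (M.el i).face a ⊆ frontier Ω →
     ∀ q, MemRM k ((M.el i).outNormal a) q → faceTanMoment (M.el i) a (u i) q = 0)

/-- the lowest-order BDM space with vanishing normal boundary trace. -/
def MemVBDM (M : Mesh) (Ω : Set Vec) (u : DiscVF M) : Prop :=
  (∀ i, VPolyDeg 1 (u i)) ∧
  (∀ i j a b, i ≠ j → (M.el i).face a = (M.el j).face b →
     ∀ x ∈ (M.el i).face a, dot3 (u i x) ((M.el i).outNormal a) = dot3 (u j x) ((M.el i).outNormal a)) ∧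
  (∀ i a, (M.el i).face a ⊆ frontier Ω →
     ∀ x ∈ (M.el i).face a, dot3 (u i x) ((M.el i).outNormal a) = 0)

/-! ### Discrete norms and bilinear forms -/

/-- broken `L²` norm of a piecewise vector field. -/
def L2d (M : Mesh) (w : DiscVF M) : ℝ :=
  Real.sqrt (∑ i, ∫ x in (M.el i).K, nsq3 (w i x))
/-- `L²` norm of the (elementwise) curl. -/
def L2curl (M : Mesh) (w : DiscVF M) : ℝ :=
  Real.sqrt (∑ i, ∫ x in (M.el i).K, nsq3 (curl3 (w i) x))
/-- broken `H¹` seminorm of the curl, `|curl v|_{1,h}`. -/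
def semiCurl (M : Mesh) (w : DiscVF M) : ℝ :=
  Real.sqrt (∑ i, ∫ x in (M.el i).K, nsqM (jac3 (curl3 (w i)) x))
/-- the norm `‖v‖_{ε,h}`. -/
def epsNorm (ε : ℝ) (M : Mesh) (w : DiscVF M) : ℝ :=
  Real.sqrt ((L2d M w) ^ 2 + (L2curl M w) ^ 2 + ε ^ 2 * (semiCurl M w) ^ 2)
/-- broken `H¹` seminorm of a piecewise scalar field. -/
def semiGrad (M : Mesh) (μ : DiscSF M) : ℝ :=
  Real.sqrt (∑ i, ∫ x in (M.el i).K, nsq3 (grad3 (μ i) x))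

/-- `a_h(w,v) = Σ_K (∇curl w, ∇curl v)_K`. -/
def ah (M : Mesh) (w v : DiscVF M) : ℝ :=
  ∑ i, ∫ x in (M.el i).K, dotM (jac3 (curl3 (w i)) x) (jac3 (curl3 (v i)) x)
/-- `b(w,v) = (curl w, curl v)`. -/
def bh (M : Mesh) (w v : DiscVF M) : ℝ :=
  ∑ i, ∫ x in (M.el i).K, dot3 (curl3 (w i) x) (curl3 (v i) x)
/-- `c(v,μ) = (v, ∇μ)`. -/
def ch (M : Mesh) (v : DiscVF M) (μ : DiscSF M) : ℝ :=
  ∑ i, ∫ x in (M.el i).K, dot3 (v i x) (grad3 (μ i) x)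
/-- load functional `(f, v)`. -/
def fpair (M : Mesh) (f : Vec → Vec) (v : DiscVF M) : ℝ :=
  ∑ i, ∫ x in (M.el i).K, dot3 (f x) (v i x)

/-- `a_h(u, v_h)` with a continuous first argument, given by `J = ∇curl u`. -/
def ahC (M : Mesh) (J : Vec → Mat) (v : DiscVF M) : ℝ :=
  ∑ i, ∫ x in (M.el i).K, dotM (J x) (jac3 (curl3 (v i)) x)
/-- `b(u, v_h)` with a continuous first argument, given by `cu = curl u`. -/
def bhC (M : Mesh) (cu : Vec → Vec) (v : DiscVF M) : ℝ :=
  ∑ i, ∫ x in (M.el i).K, dot3 (cu x) (curl3 (v i) x)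

/-- broken `L²` distance between a function and a piecewise field. -/
def errL2 (M : Mesh) (v : Vec → Vec) (w : DiscVF M) : ℝ :=
  Real.sqrt (∑ i, ∫ x in (M.el i).K, nsq3 (v x - w i x))
/-- broken `L²` distance of curls, the first argument given by `cu = curl u`. -/
def errCurl (M : Mesh) (cu : Vec → Vec) (w : DiscVF M) : ℝ :=
  Real.sqrt (∑ i, ∫ x in (M.el i).K, nsq3 (cu x - curl3 (w i) x))
/-- broken `H¹` distance of curls, the first argument given by `J = ∇curl u`. -/
def errSemi (M : Mesh) (J : Vec → Mat) (w : DiscVF M) : ℝ :=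
  Real.sqrt (∑ i, ∫ x in (M.el i).K, nsqM (J x - jac3 (curl3 (w i)) x))
/-- error in the `‖·‖_{ε,h}` norm between `u` (with `curl u = cu`, `∇curl u = J`)
and a piecewise field `w`. -/
def errNorm (ε : ℝ) (M : Mesh) (u cu : Vec → Vec) (J : Vec → Mat) (w : DiscVF M) : ℝ :=
  Real.sqrt ((errL2 M u w) ^ 2 + (errCurl M cu w) ^ 2 + ε ^ 2 * (errSemi M J w) ^ 2)
/-- broken `H¹` distance between a function with Jacobian `J` and a piecewise field. -/
def errJac (M : Mesh) (J : Vec → Mat) (w : DiscVF M) : ℝ :=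
  Real.sqrt (∑ i, ∫ x in (M.el i).K, nsqM (J x - jac3 (w i) x))

/-- sum of a quantity over the boundary faces of the mesh. -/
def bdrySum (M : Mesh) (Ω : Set Vec) (g : Fin M.n → Fin 4 → ℝ) : ℝ :=
  ∑ i, ∑ a, if (M.el i).face a ⊆ frontier Ω then g i a else 0

/-- the boundary part `ε² Σ_{F⊆∂Ω} h_F⁻¹ ‖curl v‖²_F` of the Nitsche norm. -/
def tripExtra (ε : ℝ) (M : Mesh) (Ω : Set Vec) (v : DiscVF M) : ℝ :=
  ε ^ 2 * bdrySum M Ω fun i a =>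
    (hF (M.el i) a)⁻¹ * faceInt2 (M.el i) a fun x => nsq3 (curl3 (v i) x)
/-- the Nitsche norm `|||v|||_{ε,h}`. -/
def tripNorm (ε : ℝ) (M : Mesh) (Ω : Set Vec) (v : DiscVF M) : ℝ :=
  Real.sqrt ((epsNorm ε M v) ^ 2 + tripExtra ε M Ω v)
/-- error in the Nitsche norm `|||·|||_{ε,h}`. -/
def errTrip (ε : ℝ) (M : Mesh) (Ω : Set Vec) (u cu : Vec → Vec) (J : Vec → Mat)
    (w : DiscVF M) : ℝ :=
  Real.sqrt ((errNorm ε M u cu J w) ^ 2 + ε ^ 2 * bdrySum M Ω fun i a =>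
    (hF (M.el i) a)⁻¹ * faceInt2 (M.el i) a fun x => nsq3 (cu x - curl3 (w i) x))

/-- the Nitsche bilinear form `ã_h` on discrete functions. -/
def atildeD (σ : ℝ) (M : Mesh) (Ω : Set Vec) (w v : DiscVF M) : ℝ :=
  ah M w v
  - bdrySum M Ω (fun i a => faceInt2 (M.el i) a fun x =>
      dot3 (japply (jac3 (curl3 (w i)) x) ((M.el i).outNormal a)) (curl3 (v i) x))
  - bdrySum M Ω (fun i a => faceInt2 (M.el i) a fun x =>
      dot3 (curl3 (w i) x) (japply (jac3 (curl3 (v i)) x) ((M.el i).outNormal a)))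
  + bdrySum M Ω (fun i a => (σ / hF (M.el i) a) * faceInt2 (M.el i) a fun x =>
      dot3 (curl3 (w i) x) (curl3 (v i) x))

/-- the Nitsche form `ã_h(u, v_h)` with continuous first argument `u`
(`cu = curl u`, `J = ∇curl u`). -/
def atildeC (σ : ℝ) (M : Mesh) (Ω : Set Vec) (cu : Vec → Vec) (J : Vec → Mat)
    (v : DiscVF M) : ℝ :=
  ahC M J v
  - bdrySum M Ω (fun i a => faceInt2 (M.el i) a fun x =>
      dot3 (japply (J x) ((M.el i).outNormal a)) (curl3 (v i) x))
  - bdrySum M Ω (fun i a => faceInt2 (M.el i) a fun x =>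
      dot3 (cu x) (japply (jac3 (curl3 (v i)) x) ((M.el i).outNormal a)))
  + bdrySum M Ω (fun i a => (σ / hF (M.el i) a) * faceInt2 (M.el i) a fun x =>
      dot3 (cu x) (curl3 (v i) x))
/-! ### Sobolev spaces via weak (distributional) derivatives -/

/-- smooth compactly supported scalar test functions on ℝ³. -/
def TestS (φ : Vec → ℝ) : Prop := ContDiff ℝ (⊤ : ℕ∞) φ ∧ HasCompactSupport φ
/-- smooth compactly supported vector test functions on ℝ³. -/
def TestV (φ : Vec → Vec) : Prop := ContDiff ℝ (⊤ : ℕ∞) φ ∧ HasCompactSupport φ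

/-- extension by zero outside `Ω`. -/
def zextS (Ω : Set Vec) (f : Vec → ℝ) : Vec → ℝ := Ω.indicator f
/-- extension by zero outside `Ω` (vector-valued). -/
def zextV (Ω : Set Vec) (v : Vec → Vec) : Vec → Vec := Ω.indicator v

/-- membership in `L²(Ω)`. -/
def MemL2S (Ω : Set Vec) (f : Vec → ℝ) : Prop := MemLp f 2 (volume.restrict Ω)
/-- membership in `L²(Ω;ℝ³)`. -/
def MemL2V (Ω : Set Vec) (v : Vec → Vec) : Prop := MemLp v 2 (volume.restrict Ω)

/-- `L²(Ω)` norm. -/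
def L2SΩ (Ω : Set Vec) (f : Vec → ℝ) : ℝ := Real.sqrt (∫ x in Ω, (f x) ^ 2)
/-- `L²(Ω;ℝ³)` norm. -/
def L2VΩ (Ω : Set Vec) (v : Vec → Vec) : ℝ := Real.sqrt (∫ x in Ω, nsq3 (v x))

/-- `g = ∂ᵢ f` in the sense of distributions on all of ℝ³. -/
def WkPD (i : Fin 3) (f g : Vec → ℝ) : Prop :=
  ∀ φ, TestS φ → ∫ x, g x * φ x = -∫ x, f x * pd i φ x
/-- `w = curl v` in the sense of distributions on all of ℝ³. -/
def WkCurlAll (v w : Vec → Vec) : Prop :=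
  ∀ φ, TestV φ → ∫ x, dot3 (w x) (φ x) = ∫ x, dot3 (v x) (curl3 φ x)
/-- `d = div v` in the sense of distributions on all of ℝ³. -/
def WkDivAll (v : Vec → Vec) (d : Vec → ℝ) : Prop :=
  ∀ φ, TestS φ → ∫ x, d x * φ x = -∫ x, dot3 (v x) (grad3 φ x)

/-- `g = ∂ᵢ f` in the sense of distributions on `Ω`. -/
def WkPDIn (Ω : Set Vec) (i : Fin 3) (f g : Vec → ℝ) : Prop :=
  ∀ φ, TestS φ → tsupport φ ⊆ Ω → ∫ x in Ω, g x * φ x = -∫ x in Ω, f x * pd i φ x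
/-- `J` is the distributional Jacobian of `v` on `Ω`. -/
def WkJacIn (Ω : Set Vec) (v : Vec → Vec) (J : Vec → Mat) : Prop :=
  ∀ a b, WkPDIn Ω b (fun x => v x a) fun x => J x a b
/-- `g = ∂^α f` (`α` a list of directions) in the sense of distributions on `Ω`. -/
def WkIterIn (Ω : Set Vec) (l : List (Fin 3)) (f g : Vec → ℝ) : Prop :=
  ∀ φ, TestS φ → tsupport φ ⊆ Ω →
    ∫ x in Ω, g x * φ x = (-1 : ℝ) ^ l.length * ∫ x in Ω, f x * pdIter l φ x
/-- `div v = 0` in the sense of distributions on `Ω`. -/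
def WkDivFree (Ω : Set Vec) (v : Vec → Vec) : Prop :=
  ∀ φ, TestS φ → tsupport φ ⊆ Ω → ∫ x in Ω, dot3 (v x) (grad3 φ x) = 0

/-- scalar `H₀¹(Ω)` (via zero extension), with weak gradient `g`. -/
def MemH01S (Ω : Set Vec) (f : Vec → ℝ) (g : Vec → Vec) : Prop :=
  MemL2S Ω f ∧ MemL2V Ω g ∧ ∀ i, WkPD i (zextS Ω f) fun x => zextV Ω g x i
/-- `H₀(curl,Ω)` (via zero extension), with weak curl `cv`. -/
def MemH0Curl (Ω : Set Vec) (v cv : Vec → Vec) : Prop :=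
  MemL2V Ω v ∧ MemL2V Ω cv ∧ WkCurlAll (zextV Ω v) (zextV Ω cv)
/-- `H₀(div,Ω)` (via zero extension), with weak divergence `d`. -/
def MemH0Div (Ω : Set Vec) (v : Vec → Vec) (d : Vec → ℝ) : Prop :=
  MemL2V Ω v ∧ MemL2S Ω d ∧ WkDivAll (zextV Ω v) (zextS Ω d)
/-- vector `H₀¹(Ω;ℝ³)` (via zero extension), with weak Jacobian `J`. -/
def MemH01V (Ω : Set Vec) (v : Vec → Vec) (J : Vec → Mat) : Prop :=
  MemL2V Ω v ∧ (∀ a b, MemL2S Ω fun x => J x a b) ∧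
    ∀ a b, WkPD b (zextS Ω fun x => v x a) (zextS Ω fun x => J x a b)
/-- `H₀(grad curl, Ω)`: `u ∈ H₀(curl)` with `curl u = cu ∈ H₀¹(Ω;ℝ³)`, `J = ∇cu`. -/
def MemH0GC (Ω : Set Vec) (u cu : Vec → Vec) (J : Vec → Mat) : Prop :=
  MemH0Curl Ω u cu ∧ MemH01V Ω cu J

/-- membership in `H^j(Ω)` componentwise via iterated distributional derivatives `D`,
indexed by multi-indices `α : Fin j → Fin 3` and components `c : Fin 3`. -/
def MemHiter (Ω : Set Vec) (j : ℕ) (v : Vec → Vec)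
    (D : (Fin j → Fin 3) → Fin 3 → Vec → ℝ) : Prop :=
  ∀ α c, WkIterIn Ω (List.ofFn α) (fun x => v x c) (D α c) ∧ MemL2S Ω (D α c)
/-- the `H^j(Ω)` seminorm built from the iterated derivatives `D`. -/
def semiIter (Ω : Set Vec) (j : ℕ) (D : (Fin j → Fin 3) → Fin 3 → Vec → ℝ) : ℝ :=
  Real.sqrt (∑ α : Fin j → Fin 3, ∑ c : Fin 3, ∫ x in Ω, (D α c x) ^ 2)
/-- the `H¹(Ω)` seminorm of a vector field with Jacobian `J`. -/
def semiJ (Ω : Set Vec) (J : Vec → Mat) : ℝ := Real.sqrt (∫ x in Ω, nsqM (J x))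

/-- the `H^s(Ω)` seminorm, `1 ≤ s ≤ 2`, of a vector field with Jacobian `J` and second
derivatives `D2`; for `1 < s < 2` the Sobolev–Slobodeckij seminorm of the gradient. -/
def semiHsVec (Ω : Set Vec) (s : ℝ) (J : Vec → Mat)
    (D2 : (Fin 2 → Fin 3) → Fin 3 → Vec → ℝ) : ℝ :=
  if s = 1 then semiJ Ω J
  else if s = 2 then semiIter Ω 2 D2
  else Real.sqrt (∑ a : Fin 3, ∑ b : Fin 3,
    ∫ x in Ω, ∫ y in Ω, (J x a b - J y a b) ^ 2 / dist x y ^ (3 + 2 * (s - 1)))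
/-- membership in `H^s(Ω;ℝ³)`, `1 ≤ s ≤ 2`, with data `(J, D2)`. -/
def MemHsVec (Ω : Set Vec) (s : ℝ) (v : Vec → Vec) (J : Vec → Mat)
    (D2 : (Fin 2 → Fin 3) → Fin 3 → Vec → ℝ) : Prop :=
  WkJacIn Ω v J ∧ (∀ a b, MemL2S Ω fun x => J x a b) ∧
  (s = 2 → MemHiter Ω 2 v D2) ∧
  (1 < s → s < 2 → ∀ a b, Integrable
    (fun p : Vec × Vec => (J p.1 a b - J p.2 a b) ^ 2 / dist p.1 p.2 ^ (3 + 2 * (s - 1)))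
    ((volume.restrict Ω).prod (volume.restrict Ω)))

/-! ### The continuous problems -/

/-- weak solution of the quad-curl singular perturbation problem
`ε² curl⁴u + curl²u = f`, `div u = 0`, `u × n = curl u = 0` on `∂Ω`
(mixed formulation with multiplier `λ = 0`): here `cu = curl u`, `J = ∇curl u`. -/
def IsQuadCurlSol (Ω : Set Vec) (ε : ℝ) (f u cu : Vec → Vec) (J : Vec → Mat) : Prop :=
  MemH0GC Ω u cu J ∧ WkDivFree Ω u ∧
  ∀ v cv Jv, MemH0GC Ω v cv Jv →
    ε ^ 2 * (∫ x in Ω, dotM (J x) (Jv x)) + (∫ x in Ω, dot3 (cu x) (cv x))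
      = ∫ x in Ω, dot3 (f x) (v x)

/-- weak solution of the reduced double curl problem
`curl²u₀ = f`, `div u₀ = 0`, `u₀ × n = 0` on `∂Ω`; here `cu0 = curl u₀`. -/
def IsReducedSol (Ω : Set Vec) (f u0 cu0 : Vec → Vec) : Prop :=
  MemH0Curl Ω u0 cu0 ∧ WkDivFree Ω u0 ∧
  ∀ v cv, MemH0Curl Ω v cv →
    (∫ x in Ω, dot3 (cu0 x) (cv x)) = ∫ x in Ω, dot3 (f x) (v x)

/-- the continuous mixed formulation: `u ∈ H₀(grad curl)`, `λ ∈ H₀¹`,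
`ε²a(u,v) + b(u,v) + c(v,λ) = (f,v)` and `c(u,μ) = 0`. -/
def MixedSol (Ω : Set Vec) (ε : ℝ) (f u cu : Vec → Vec) (J : Vec → Mat)
    (lam : Vec → ℝ) (glam : Vec → Vec) : Prop :=
  MemH0GC Ω u cu J ∧ MemH01S Ω lam glam ∧
  (∀ v cv Jv, MemH0GC Ω v cv Jv →
    ε ^ 2 * (∫ x in Ω, dotM (J x) (Jv x)) + (∫ x in Ω, dot3 (cu x) (cv x))
      + (∫ x in Ω, dot3 (v x) (glam x)) = ∫ x in Ω, dot3 (f x) (v x)) ∧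
  (∀ μ gμ, MemH01S Ω μ gμ → ∫ x in Ω, dot3 (u x) (gμ x) = 0)

/-! ### Discrete methods -/

/-- the mixed finite element method (4.1)-(4.2). -/
def DiscMixedSol (k : ℕ) (M : Mesh) (Ω : Set Vec) (ε : ℝ) (f : Vec → Vec)
    (u : DiscVF M) (lam : DiscSF M) : Prop :=
  MemWh0 k M Ω u ∧ MemVhg k M Ω lam ∧
  (∀ v, MemWh0 k M Ω v → ε ^ 2 * ah M u v + bh M u v + ch M v lam = fpair M f v) ∧
  (∀ μ, MemVhg k M Ω μ → ch M u μ = 0)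

/-- the Nitsche-modified mixed finite element method (5.1)-(5.2). -/
def DiscNitscheSol (k : ℕ) (M : Mesh) (Ω : Set Vec) (σ ε : ℝ) (f : Vec → Vec)
    (u : DiscVF M) (lam : DiscSF M) : Prop :=
  MemWh k M Ω u ∧ MemVhg k M Ω lam ∧
  (∀ v, MemWh k M Ω v →
    ε ^ 2 * atildeD σ M Ω u v + bh M u v + ch M v lam = fpair M f v) ∧
  (∀ μ, MemVhg k M Ω μ → ch M u μ = 0)

/-! ### Falk–Winther projections and derived interpolation operators -/

/-- The Falk–Winther local bounded commuting projections onto the Lagrange, Nédélec and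
BDM spaces, together with the properties used in the paper. `avg` plays the role of the
projection `Q_h` onto piecewise constants. -/
structure FW (k : ℕ) (M : Mesh) (Ω : Set Vec) where
  Ig : (Vec → ℝ) → DiscSF M
  IND : (Vec → Vec) → DiscVF M
  IBDM : (Vec → Vec) → DiscVF M
  mapsIg : ∀ v gv, MemH01S Ω v gv → MemVhg k M Ω (Ig v)
  mapsIND : ∀ v cv, MemH0Curl Ω v cv → MemVND k M Ω (IND v)
  mapsIBDM : ∀ v dv, MemH0Div Ω v dv → MemVBDM M Ω (IBDM v)
  zeroIBDM : ∀ i x, IBDM (fun _ => (0 : Vec)) i x = 0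
  comm_grad : ∀ v gv, MemH01S Ω v gv → ∀ i, ∀ x ∈ (M.el i).K, IND gv i x = grad3 (Ig v i) x
  comm_curl : ∀ v cv, MemH0Curl Ω v cv → ∀ i, ∀ x ∈ (M.el i).K, IBDM cv i x = curl3 (IND v i) x
  comm_div : ∀ v dv, MemH0Div Ω v dv → ∀ i, ∀ x ∈ (M.el i).K, div3 (IBDM v i) x = avg M dv i

/-- DoF-matching conditions defining the interpolations `I_{h0}^d`, `I_h^d` into the
Tai–Winther spaces relative to a given piecewise field `B` (namely `I_h^{BDM}v`): the
normal face DoFs match, and on interior faces the tangential DoFs match the face average. -/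
def MatchIdInt (M : Mesh) (B w : DiscVF M) : Prop :=
  (∀ i a, ∀ q, PolyDeg 1 q → faceNorMoment (M.el i) a (w i) q = faceNorMoment (M.el i) a (B i) q) ∧
  (∀ i j a b, i ≠ j → (M.el i).face a = (M.el j).face b →
    ∀ q, MemRT ((M.el i).outNormal a) q →
      faceTanMoment (M.el i) a (w i) q
        = (faceTanMoment (M.el i) a (B i) q + faceTanMoment (M.el i) a (B j) q) / 2)

/-- `w = I_{h0}^d v` where `B = I_h^{BDM} v`. -/
def IsId0 (M : Mesh) (Ω : Set Vec) (B w : DiscVF M) : Prop :=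
  MemVh0d M Ω w ∧ MatchIdInt M B w

/-- `w = I_h^d v` where `B = I_h^{BDM} v`: additionally the tangential DoFs on boundary
faces match those of `B`. -/
def IsId (M : Mesh) (Ω : Set Vec) (B w : DiscVF M) : Prop :=
  MemVhd M Ω w ∧ MatchIdInt M B w ∧
  ∀ i a, (M.el i).face a ⊆ frontier Ω →
    ∀ q, MemRT ((M.el i).outNormal a) q →
      faceTanMoment (M.el i) a (w i) q = faceTanMoment (M.el i) a (B i) q

/-- DoF-matching conditions defining `I_{h0}^{gc}`, `I_h^{gc}` relative to a given
piecewise field `N` (namely `I_h^{ND}v`). -/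
def MatchIgcInt (k : ℕ) (M : Mesh) (N w : DiscVF M) : Prop :=
  (∀ i a b, a ≠ b → ∀ q, PolyDeg k q →
     edgeMoment (M.el i) a b (w i) q = edgeMoment (M.el i) a b (N i) q) ∧
  (∀ i a, ∀ q, MemRM k ((M.el i).outNormal a) q →
     faceTanMoment (M.el i) a (w i) q = faceTanMoment (M.el i) a (N i) q) ∧
  (∀ i j a b, i ≠ j → (M.el i).face a = (M.el j).face b →
    ∀ q, MemRT ((M.el i).outNormal a) q →
      faceTanMoment (M.el i) a (curl3 (w i)) q
        = (faceTanMoment (M.el i) a (curl3 (N i)) q + faceTanMoment (M.el i) a (curl3 (N j)) q) / 2)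

/-- `w = I_{h0}^{gc} v` where `N = I_h^{ND} v`. -/
def IsIgc0 (k : ℕ) (M : Mesh) (Ω : Set Vec) (N w : DiscVF M) : Prop :=
  MemWh0 k M Ω w ∧ MatchIgcInt k M N w

/-- `w = I_h^{gc} v` where `N = I_h^{ND} v`. -/
def IsIgc (k : ℕ) (M : Mesh) (Ω : Set Vec) (N w : DiscVF M) : Prop :=
  MemWh k M Ω w ∧ MatchIgcInt k M N w ∧
  ∀ i a, (M.el i).face a ⊆ frontier Ω →
    ∀ q, MemRT ((M.el i).outNormal a) q →
      faceTanMoment (M.el i) a (curl3 (w i)) q = faceTanMoment (M.el i) a (curl3 (N i)) q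

/-- `B` maps `H₀(div,Ω)` into the BDM space. -/
def BDMmaps (M : Mesh) (Ω : Set Vec) (B : (Vec → Vec) → DiscVF M) : Prop :=
  ∀ v dv, MemH0Div Ω v dv → MemVBDM M Ω (B v)
/-- the Falk–Winther `L²`-bound `‖I_h^{BDM}v‖₀ ≲ ‖v‖₀ + h‖div v‖₀`. -/
def BDMbound (M : Mesh) (Ω : Set Vec) (B : (Vec → Vec) → DiscVF M) (C₀ : ℝ) : Prop :=
  ∀ v dv, MemH0Div Ω v dv → L2d M (B v) ≤ C₀ * (L2VΩ Ω v + M.hsize * L2SΩ Ω dv)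
/-- the elementwise Falk–Winther error estimates
`Σ_K h_K^{2(i-j)} |v - I_h^{BDM}v|²_{i,K} ≲ |v|_j²` for `i = 0,1`, `j = 1,2`. -/
def BDMest (M : Mesh) (Ω : Set Vec) (B : (Vec → Vec) → DiscVF M) (C₀ : ℝ) : Prop :=
  (∀ v dv Jv, MemH0Div Ω v dv → WkJacIn Ω v Jv →
     (∑ i, (Metric.diam (M.el i).K) ^ (-2 : ℝ) * ∫ x in (M.el i).K, nsq3 (v x - B v i x))
       + (∑ i, ∫ x in (M.el i).K, nsqM (Jv x - jac3 (B v i) x)) ≤ C₀ * (semiJ Ω Jv) ^ 2) ∧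
  (∀ v dv Jv D2, MemH0Div Ω v dv → WkJacIn Ω v Jv → MemHiter Ω 2 v D2 →
     (∑ i, (Metric.diam (M.el i).K) ^ (-4 : ℝ) * ∫ x in (M.el i).K, nsq3 (v x - B v i x))
       + (∑ i, (Metric.diam (M.el i).K) ^ (-2 : ℝ) * ∫ x in (M.el i).K, nsqM (Jv x - jac3 (B v i) x))
       ≤ C₀ * (semiIter Ω 2 D2) ^ 2)

/-! ### Subspaces for the dimension count -/

/-- the subspace `∇P_{k+1}` of vector fields. -/
def gradSpace (k : ℕ) : Submodule ℝ (Vec → Vec) :=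
  Submodule.span ℝ {v | ∃ q, PolyDeg (k + 1) q ∧ v = fun x => grad3 q x}
/-- the subspace `x × P₁(ℝ³;ℝ³)`. -/
def crossSpace : Submodule ℝ (Vec → Vec) :=
  Submodule.span ℝ {v | ∃ p, VPolyDeg 1 p ∧ v = fun x => cross3 x (p x)}
/-- the subspace `b_K P₁(ℝ³;ℝ³)`. -/
def bubbleSpace (T : Tetra) : Submodule ℝ (Vec → Vec) :=
  Submodule.span ℝ {v | ∃ b r, T.IsBubble b ∧ VPolyDeg 1 r ∧ v = fun x => b x • r x}

/-!
Write `v = ∇q + x × p + b r` with `curl v = 0`. The bubble `b` and its gradient vanish at the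
vertices, so the affine field `curl (x × p)` vanishes there, hence everywhere; a curl-free field
orthogonal to `x` is homogeneous of degree `-1`, so the smooth field `x × p` is zero. Therefore
`curl (b r) = ∇b × r + b curl r` vanishes on every face. On the relative interior of the face
`λᵢ = 0` it is a positive multiple of `∇λᵢ × r`, so `r` is parallel to `∇λᵢ` on the closed face.
At a vertex, where faces with independent normals meet, this forces `r = 0`, and an affine
field vanishing at the four vertices is zero.
-/

section DifferentialCalculus

lemma totalDegree_pderiv_le {R σ : Type*} [CommSemiring R] {n : ℕ} {p : MvPolynomial σ R}
    (hp : p.totalDegree ≤ n + 1) (i : σ) : (MvPolynomial.pderiv i p).totalDegree ≤ n := by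
  refine Finset.sup_le fun m hm => ?_
  have hsupp : m + Finsupp.single i 1 ∈ p.support := by
    rw [MvPolynomial.mem_support_iff, MvPolynomial.coeff_pderiv] at hm
    exact MvPolynomial.mem_support_iff.2 (left_ne_zero_of_mul hm)
  have hdeg := (MvPolynomial.le_totalDegree hsupp).trans hp
  rw [Finsupp.sum_add_index' (fun _ => rfl) (fun _ _ _ => rfl), Finsupp.sum_single_index rfl]
    at hdeg
  exact Nat.le_of_succ_le_succ hdeg

lemma fderiv_mvPolynomial_eval_single {𝕜 σ : Type*} [NontriviallyNormedField 𝕜] [CompleteSpace 𝕜]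
    [Finite σ] [DecidableEq σ] (p : MvPolynomial σ 𝕜) (i : σ) (x : σ → 𝕜) :
    fderiv 𝕜 (fun y => MvPolynomial.eval y p) x (Pi.single i 1)
      = MvPolynomial.eval x (MvPolynomial.pderiv i p) := by
  cases nonempty_fintype σ
  have hdiff (q : MvPolynomial σ 𝕜) :
      DifferentiableAt 𝕜 (fun y => MvPolynomial.eval y q) x :=
    (AnalyticOnNhd.eval_mvPolynomial q x (Set.mem_univ x)).differentiableAt
  induction p using MvPolynomial.induction_on with
  | C a => simp
  | add p q hp hq =>
    simp only [map_add]
    rw [fderiv_fun_add (hdiff p) (hdiff q), add_apply, hp, hq]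
  | mul_X p j hp =>
    simp only [map_mul, MvPolynomial.eval_X, Derivation.leibniz, MvPolynomial.pderiv_X]
    rw [fderiv_fun_mul (hdiff p) (differentiableAt_apply j x), (hasFDerivAt_apply j x).fderiv]
    simp [hp, Pi.single_apply, eq_comm, apply_ite]

/-- By Euler's relation `f` is homogeneous of degree `-1`, so it would blow up at the origin unless
it vanishes. -/
lemma eq_zero_of_fderiv_apply_self_eq_neg {E F : Type*} [NormedAddCommGroup E] [NormedSpace ℝ E]
    [NormedAddCommGroup F] [NormedSpace ℝ F] {f : E → F} (hf : Differentiable ℝ f)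
    (heuler : ∀ x, fderiv ℝ f x x = -f x) : f = 0 := by
  funext x
  have hderiv (t : ℝ) : HasDerivAt (fun s : ℝ => s • f (s • x)) 0 t := by
    have hline : HasDerivAt (fun s : ℝ => s • x) x t := by
      simpa using (hasDerivAt_id t).smul_const x
    have hcomp := (hf (t • x)).hasFDerivAt.comp_hasDerivAt t hline
    have hprod := (hasDerivAt_id t).smul hcomp
    have hzero : t • fderiv ℝ f (t • x) x + f (t • x) = 0 := by
      rw [← map_smul, heuler, neg_add_cancel]
    exact hprod.congr_deriv (by simpa using hzero)
  have hconst := is_const_of_deriv_eq_zero (fun t => (hderiv t).differentiableAt)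
    (fun t => (hderiv t).deriv) 1 0
  simpa using hconst

end DifferentialCalculus

section VectorCalculus

lemma cross3_eq_crossProduct (v w : Vec) : cross3 v w = crossProduct v w := (cross_apply v w).symm

lemma dot3_self_cross3 (v w : Vec) : dot3 v (cross3 v w) = 0 :=
  (cross3_eq_crossProduct v w).symm ▸ dot_self_cross v w

lemma eq_zero_of_cross3_eq_zero {m n r w : Vec} (hm : cross3 m r = 0) (hn : cross3 n r = 0)
    (hm₀ : m ≠ 0) (hmw : dot3 m w = 0) (hnw : dot3 n w ≠ 0) : r = 0 := by
  have hparallel {a : Vec} (ha : cross3 a r = 0) : dot3 a w • r = dot3 r w • a := by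
    rw [cross3_eq_crossProduct] at ha
    have h := cross_cross_eq_smul_sub_smul a r w
    rw [ha, map_zero, LinearMap.zero_apply] at h
    exact sub_eq_zero.1 h.symm
  have hrw : dot3 r w = 0 := by
    have h := hparallel hm
    rw [hmw, zero_smul] at h
    exact (smul_eq_zero.1 h.symm).resolve_right hm₀
  have h := hparallel hn
  rw [hrw, zero_smul] at h
  exact (smul_eq_zero.1 h).resolve_left hnw

lemma dot3_grad3 (f : Vec → ℝ) (x u : Vec) : dot3 (grad3 f x) u = fderiv ℝ f x u := by
  conv_rhs => rw [pi_eq_sum_univ' u]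
  simp [dot3, grad3, pd, mul_comm]

lemma pd_mul (i : Fin 3) {f g : Vec → ℝ} {x : Vec} (hf : DifferentiableAt ℝ f x)
    (hg : DifferentiableAt ℝ g x) :
    pd i (fun y => f y * g y) x = f x * pd i g x + g x * pd i f x := by
  simp [pd, fderiv_fun_mul hf hg]

lemma pd_add (i : Fin 3) {f g : Vec → ℝ} {x : Vec} (hf : DifferentiableAt ℝ f x)
    (hg : DifferentiableAt ℝ g x) : pd i (fun y => f y + g y) x = pd i f x + pd i g x := by
  simp [pd, fderiv_fun_add hf hg]

lemma pd_sum {ι : Type*} [Fintype ι] (i : Fin 3) {f : ι → Vec → ℝ} {x : Vec}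
    (hf : ∀ j, DifferentiableAt ℝ (f j) x) :
    pd i (fun y => ∑ j, f j y) x = ∑ j, pd i (f j) x := by
  simp [pd, fderiv_fun_sum fun j _ => hf j]

lemma pd_coord (i j : Fin 3) (x : Vec) : pd i (fun y => y j) x = if j = i then 1 else 0 := by
  simp [pd, (hasFDerivAt_apply j x).fderiv, Pi.single_apply]

lemma grad3_mul {f g : Vec → ℝ} {x : Vec} (hf : DifferentiableAt ℝ f x)
    (hg : DifferentiableAt ℝ g x) :
    grad3 (fun y => f y * g y) x = f x • grad3 g x + g x • grad3 f x :=
  funext fun i => pd_mul i hf hg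

lemma curl3_add {v w : Vec → Vec} {x : Vec} (hv : DifferentiableAt ℝ v x)
    (hw : DifferentiableAt ℝ w x) : curl3 (fun y => v y + w y) x = curl3 v x + curl3 w x := by
  have hpd (i j : Fin 3) :
      pd i (fun y => v y j + w y j) x = pd i (fun y => v y j) x + pd i (fun y => w y j) x :=
    pd_add i (differentiableAt_pi.1 hv j) (differentiableAt_pi.1 hw j)
  funext i
  fin_cases i <;> simp [curl3, hpd] <;> ring

lemma curl3_smul {b : Vec → ℝ} {r : Vec → Vec} {x : Vec} (hb : DifferentiableAt ℝ b x)
    (hr : DifferentiableAt ℝ r x) :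
    curl3 (fun y => b y • r y) x = cross3 (grad3 b x) (r x) + b x • curl3 r x := by
  have hpd (i j : Fin 3) :
      pd i (fun y => b y * r y j) x = b x * pd i (fun y => r y j) x + r x j * pd i b x :=
    pd_mul i hb (differentiableAt_pi.1 hr j)
  funext i
  fin_cases i <;> simp [curl3, cross3, grad3, hpd] <;> ring

lemma curl3_eq_zero_iff {v : Vec → Vec} {x : Vec} :
    curl3 v x = 0 ↔ ∀ i j, pd i (fun y => v y j) x = pd j (fun y => v y i) x := by
  constructor
  · intro h
    have h₀ := sub_eq_zero.1 (congrFun h 0)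
    have h₁ := sub_eq_zero.1 (congrFun h 1)
    have h₂ := sub_eq_zero.1 (congrFun h 2)
    intro i j
    fin_cases i <;> fin_cases j <;> first | rfl | assumption | (symm; assumption)
  · intro h
    simp [curl3, h 2 1, h 0 2, h 1 0]

lemma curl3_grad3 {f : Vec → ℝ} {x : Vec} (hf : ContDiffAt ℝ 2 f x) :
    curl3 (grad3 f) x = 0 := by
  have hdiff : DifferentiableAt ℝ (fderiv ℝ f) x :=
    (hf.fderiv_right (m := 1) le_rfl).differentiableAt one_ne_zero
  have hpd (i j : Fin 3) : pd i (fun y => grad3 f y j) x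
      = fderiv ℝ (fderiv ℝ f) x (Pi.single i 1) (Pi.single j 1) := by
    simp [grad3, pd, fderiv_clm_apply hdiff (differentiableAt_const _)]
  refine curl3_eq_zero_iff.2 fun i j => ?_
  rw [hpd, hpd]
  exact hf.isSymmSndFDerivAt (by simp) _ _

/-- Curl-freeness turns `(x · ∇)w` into `∇(x · w) - w = -w`, which is Euler's relation for degree
`-1`. -/
lemma eq_zero_of_curl3_eq_zero_of_dot3_eq_zero {w : Vec → Vec} (hw : Differentiable ℝ w)
    (hcurl : ∀ x, curl3 w x = 0) (hradial : ∀ x, dot3 x (w x) = 0) : w = 0 := by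
  refine eq_zero_of_fderiv_apply_self_eq_neg hw fun x => funext fun i => ?_
  have hwi (j : Fin 3) : DifferentiableAt ℝ (fun y => w y j) x := differentiableAt_pi.1 (hw x) j
  have hgrad : w x i + ∑ j, x j * pd i (fun y => w y j) x = 0 := by
    have hpd (j : Fin 3) : pd i (fun y => y j * w y j) x
        = x j * pd i (fun y => w y j) x + w x j * if j = i then 1 else 0 := by
      rw [pd_mul i (differentiableAt_apply j x) (hwi j), pd_coord]
    have hsum : pd i (fun y => ∑ j, y j * w y j) x = ∑ j, pd i (fun y => y j * w y j) x :=
      pd_sum i fun j => (differentiableAt_apply j x).mul (hwi j)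
    have hconst : pd i (fun y => ∑ j, y j * w y j) x = 0 := by
      rw [show (fun y => ∑ j, y j * w y j) = fun _ => 0 from funext hradial]
      simp [pd]
    simpa [hpd, Finset.sum_add_distrib, add_comm] using hsum.symm.trans hconst
  calc fderiv ℝ w x x i = fderiv ℝ (fun y => w y i) x x := by rw [fderiv_apply (hw x)]; rfl
    _ = ∑ j, pd j (fun y => w y i) x * x j := (dot3_grad3 _ _ _).symm
    _ = ∑ j, x j * pd i (fun y => w y j) x := by
      simp only [curl3_eq_zero_iff.1 (hcurl x) i, mul_comm]
    _ = -w x i := eq_neg_of_add_eq_zero_right hgrad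

lemma hasFDerivAt_affineMap (φ : Vec →ᵃ[ℝ] ℝ) (x : Vec) :
    HasFDerivAt φ (LinearMap.toContinuousLinearMap φ.linear) x := by
  rw [φ.decomp]
  exact (LinearMap.toContinuousLinearMap φ.linear).hasFDerivAt.add_const (φ 0)

lemma grad3_affineMap (φ : Vec →ᵃ[ℝ] ℝ) (x : Vec) :
    grad3 φ x = fun i => φ.linear (Pi.single i 1) := by
  funext i
  rw [grad3, pd, (hasFDerivAt_affineMap φ x).fderiv]
  rfl

lemma dot3_grad3_affineMap (φ : Vec →ᵃ[ℝ] ℝ) (x u v : Vec) :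
    dot3 (grad3 φ x) (u - v) = φ u - φ v := by
  rw [dot3_grad3, (hasFDerivAt_affineMap φ x).fderiv]
  exact φ.linearMap_vsub u v

end VectorCalculus

section PolynomialFields

variable {n : ℕ} {f g : Vec → ℝ} {v : Vec → Vec}

lemma PolyDeg.sub (hf : PolyDeg n f) (hg : PolyDeg n g) : PolyDeg n fun x => f x - g x := by
  obtain ⟨p, hp, hfp⟩ := hf
  obtain ⟨q, hq, hgq⟩ := hg
  exact ⟨p - q, (MvPolynomial.totalDegree_sub p q).trans (max_le hp hq),
    fun x => by simp [hfp, hgq]⟩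

lemma PolyDeg.coord_mul (hf : PolyDeg n f) (i : Fin 3) : PolyDeg (n + 1) fun x => x i * f x := by
  obtain ⟨p, hp, hfp⟩ := hf
  refine ⟨MvPolynomial.X i * p, (MvPolynomial.totalDegree_mul _ _).trans ?_,
    fun x => by simp [hfp]⟩
  rw [MvPolynomial.totalDegree_X, add_comm]
  exact Nat.succ_le_succ hp

lemma PolyDeg.pd (hf : PolyDeg (n + 1) f) (i : Fin 3) : PolyDeg n (pd i f) := by
  obtain ⟨p, hp, hfp⟩ := hf
  obtain rfl : f = fun x => MvPolynomial.eval x p := funext hfp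
  exact ⟨MvPolynomial.pderiv i p, totalDegree_pderiv_le hp i,
    fun x => by rw [_root_.pd, fderiv_mvPolynomial_eval_single]⟩

lemma PolyDeg.contDiff (hf : PolyDeg n f) {k : WithTop ℕ∞} : ContDiff ℝ k f := by
  obtain ⟨p, -, hfp⟩ := hf
  obtain rfl : f = fun x => MvPolynomial.eval x p := funext hfp
  exact (AnalyticOnNhd.eval_mvPolynomial p).contDiff

lemma PolyDeg.differentiable (hf : PolyDeg n f) : Differentiable ℝ f :=
  hf.contDiff.differentiable one_ne_zero

lemma PolyDeg.exists_const (hf : PolyDeg 0 f) : ∃ c, ∀ x, f x = c := by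
  obtain ⟨p, hp, hfp⟩ := hf
  refine ⟨p.coeff 0, fun x => ?_⟩
  rw [hfp, MvPolynomial.totalDegree_eq_zero_iff_eq_C.1 (Nat.le_zero.1 hp)]
  simp

lemma polyDeg_one_iff_exists_affineMap : PolyDeg 1 f ↔ ∃ φ : Vec →ᵃ[ℝ] ℝ, ⇑φ = f := by
  constructor
  · intro hf
    have hconst (x : Vec) : fderiv ℝ f x = fderiv ℝ f 0 := by
      refine ContinuousLinearMap.coe_injective (LinearMap.pi_ext' fun i => LinearMap.ext_ring ?_)
      obtain ⟨c, hc⟩ := (hf.pd i).exists_const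
      exact (hc x).trans (hc 0).symm
    let φ : Vec →ᵃ[ℝ] ℝ := (fderiv ℝ f 0).toLinearMap.toAffineMap + AffineMap.const ℝ Vec (f 0)
    refine ⟨φ, eq_of_fderiv_eq (fun x => (hasFDerivAt_affineMap φ x).differentiableAt)
      hf.differentiable (fun x => ?_) 0 (by simp [φ])⟩
    rw [(hasFDerivAt_affineMap φ x).fderiv, hconst]
    ext
    simp [φ]
  · rintro ⟨φ, rfl⟩
    refine ⟨MvPolynomial.C (φ 0)
      + ∑ i, MvPolynomial.C (φ.linear (Pi.single i 1)) * MvPolynomial.X i, ?_, fun x => ?_⟩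
    · refine (MvPolynomial.totalDegree_add _ _).trans (max_le (by simp) ?_)
      refine MvPolynomial.totalDegree_finsetSum_le fun i _ => ?_
      refine (MvPolynomial.totalDegree_mul _ _).trans ?_
      simp
    · rw [φ.decomp]
      conv_lhs => rw [pi_eq_sum_univ' x]
      simp [mul_comm, add_comm]

lemma VPolyDeg.differentiable (hv : VPolyDeg n v) : Differentiable ℝ v :=
  differentiable_pi.2 fun i => (hv i).differentiable

lemma VPolyDeg.grad3 (hf : PolyDeg (n + 1) f) : VPolyDeg n (grad3 f) := fun i => hf.pd i

lemma VPolyDeg.cross3_id (hv : VPolyDeg n v) : VPolyDeg (n + 1) fun x => cross3 x (v x) := by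
  intro i
  fin_cases i
  · exact ((hv 2).coord_mul 1).sub ((hv 1).coord_mul 2)
  · exact ((hv 0).coord_mul 2).sub ((hv 2).coord_mul 0)
  · exact ((hv 1).coord_mul 0).sub ((hv 0).coord_mul 1)

lemma VPolyDeg.curl3 (hv : VPolyDeg (n + 1) v) : VPolyDeg n (curl3 v) := by
  intro i
  fin_cases i
  · exact ((hv 2).pd 1).sub ((hv 1).pd 2)
  · exact ((hv 0).pd 2).sub ((hv 2).pd 0)
  · exact ((hv 1).pd 0).sub ((hv 0).pd 1)

end PolynomialFields

section Tetrahedra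

lemma exists_ne_and_ne (i j : Fin 4) : ∃ m, m ≠ i ∧ m ≠ j := by decide +revert

namespace Tetra

/-- The vertices of a tetrahedron as an affine basis of `ℝ³`; its coordinates are the barycentric
coordinates. -/
def affineBasis (T : Tetra) : AffineBasis (Fin 4) ℝ Vec :=
  ⟨T.vtx, T.indep, (T.indep.affineSpan_eq_top_iff_card_eq_finrank_add_one).2 (by simp)⟩

/-- The barycentric coordinate of a tetrahedron which is `1` at the vertex `i`. -/
def bary (T : Tetra) (i : Fin 4) : Vec →ᵃ[ℝ] ℝ := T.affineBasis.coord i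

/-- The quartic bubble function of a tetrahedron, vanishing on its faces. -/
def bubble (T : Tetra) (x : Vec) : ℝ := ∏ i, T.bary i x

/-- The relative interior of the face opposite to the vertex `i`, described by barycentric
coordinates. -/
def faceInterior (T : Tetra) (i : Fin 4) : Set Vec :=
  {x | T.bary i x = 0 ∧ ∀ m ≠ i, 0 < T.bary m x}

variable {T : Tetra} {i j : Fin 4} {x : Vec} {r : Vec → Vec}

lemma bary_vtx (T : Tetra) (i j : Fin 4) : T.bary i (T.vtx j) = if i = j then 1 else 0 :=
  T.affineBasis.coord_apply i j

lemma vtx_mem_face (T : Tetra) (hji : j ≠ i) : T.vtx j ∈ T.face i :=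
  subset_convexHull ℝ _ ⟨j, hji, rfl⟩

lemma grad3_bary_ne_zero (T : Tetra) (i : Fin 4) (x : Vec) : grad3 (T.bary i) x ≠ 0 := by
  obtain ⟨j, hj⟩ := exists_ne i
  intro h
  have hdiff := dot3_grad3_affineMap (T.bary i) x (T.vtx i) (T.vtx j)
  simp [h, dot3, bary_vtx, hj.symm] at hdiff

lemma _root_.PolyDeg.eq_zero_of_forall_vtx {f : Vec → ℝ} (hf : PolyDeg 1 f) (T : Tetra)
    (hvtx : ∀ j, f (T.vtx j) = 0) : f = 0 := by
  obtain ⟨φ, rfl⟩ := polyDeg_one_iff_exists_affineMap.1 hf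
  have hφ : φ = AffineMap.const ℝ Vec 0 :=
    AffineMap.ext_on T.affineBasis.tot (by rintro _ ⟨j, rfl⟩; exact hvtx j)
  rw [hφ]
  rfl

lemma _root_.VPolyDeg.eq_zero_of_forall_vtx {v : Vec → Vec} (hv : VPolyDeg 1 v) (T : Tetra)
    (hvtx : ∀ j, v (T.vtx j) = 0) : v = 0 :=
  funext fun x => funext fun i =>
    congrFun ((hv i).eq_zero_of_forall_vtx T fun j => congrFun (hvtx j) i) x

lemma isBubble_iff {b : Vec → ℝ} : T.IsBubble b ↔ b = T.bubble := by
  have hbary (i : Fin 4) : PolyDeg 1 (T.bary i) := polyDeg_one_iff_exists_affineMap.2 ⟨_, rfl⟩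
  constructor
  · rintro ⟨lam, ⟨hdeg, hvtx⟩, hb⟩
    have hlam (i : Fin 4) (x : Vec) : lam i x = T.bary i x := by
      refine sub_eq_zero.1 (congrFun (((hdeg i).sub (hbary i)).eq_zero_of_forall_vtx T
        fun j => ?_) x)
      rw [hvtx, bary_vtx, sub_self]
    funext x
    simp only [hb, hlam, bubble]
  · rintro rfl
    exact ⟨fun i => T.bary i, ⟨hbary, T.bary_vtx⟩, fun _ => rfl⟩

lemma differentiable_prod_bary (T : Tetra) (s : Finset (Fin 4)) :
    Differentiable ℝ fun x => ∏ m ∈ s, T.bary m x :=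
  fun x => (HasFDerivAt.finsetProd fun m _ => hasFDerivAt_affineMap (T.bary m) x).differentiableAt

lemma differentiable_bubble (T : Tetra) : Differentiable ℝ T.bubble :=
  T.differentiable_prod_bary Finset.univ

lemma bubble_eq_zero (h : T.bary i x = 0) : T.bubble x = 0 :=
  Finset.prod_eq_zero (Finset.mem_univ i) h

lemma grad3_bubble_of_bary_eq_zero (h : T.bary i x = 0) :
    grad3 T.bubble x = (∏ m ∈ Finset.univ.erase i, T.bary m x) • grad3 (T.bary i) x := by
  have hfactor : T.bubble = fun y => T.bary i y * ∏ m ∈ Finset.univ.erase i, T.bary m y :=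
    funext fun y => (Finset.mul_prod_erase _ (fun m => T.bary m y) (Finset.mem_univ i)).symm
  rw [hfactor, grad3_mul (hasFDerivAt_affineMap _ x).differentiableAt
    (T.differentiable_prod_bary _ x), h, zero_smul, zero_add]

lemma curl3_bubble_smul_of_bary_eq_zero (hr : DifferentiableAt ℝ r x) (h : T.bary i x = 0) :
    curl3 (fun y => T.bubble y • r y) x
      = (∏ m ∈ Finset.univ.erase i, T.bary m x) • cross3 (grad3 (T.bary i) x) (r x) := by
  rw [curl3_smul (T.differentiable_bubble x) hr, bubble_eq_zero h, zero_smul, add_zero,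
    grad3_bubble_of_bary_eq_zero h]
  simp only [cross3_eq_crossProduct, map_smul, LinearMap.smul_apply]

lemma curl3_bubble_smul_vtx (hr : DifferentiableAt ℝ r (T.vtx j)) :
    curl3 (fun y => T.bubble y • r y) (T.vtx j) = 0 := by
  obtain ⟨i, hi⟩ := exists_ne j
  obtain ⟨m, hmj, hmi⟩ := exists_ne_and_ne j i
  rw [curl3_bubble_smul_of_bary_eq_zero (i := i) hr (by rw [bary_vtx, if_neg hi]),
    Finset.prod_eq_zero (Finset.mem_erase.2 ⟨hmi, Finset.mem_univ m⟩)
      (by rw [bary_vtx, if_neg hmj]), zero_smul]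

lemma faceInterior_subset_face (T : Tetra) (i : Fin 4) : T.faceInterior i ⊆ T.face i := by
  rintro x ⟨hi, hpos⟩
  have hsum : ∑ m ∈ Finset.univ.erase i, T.bary m x = 1 := by
    rw [Finset.sum_erase (f := fun m => T.bary m x) _ hi]
    exact T.affineBasis.sum_coord_apply_eq_one x
  have hx : ∑ m ∈ Finset.univ.erase i, T.bary m x • T.vtx m = x := by
    rw [Finset.sum_erase _ (by rw [hi, zero_smul])]
    exact T.affineBasis.linear_combination_coord_eq_self x
  rw [← hx]
  exact (convex_convexHull ℝ _).sum_mem (fun m hm => (hpos m (Finset.ne_of_mem_erase hm)).le) hsum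
    fun m hm => T.vtx_mem_face (Finset.ne_of_mem_erase hm)

lemma faceInterior_nonempty (T : Tetra) (i : Fin 4) : (T.faceInterior i).Nonempty := by
  have hcard : (Finset.univ.erase i).card = 3 := by simp
  refine ⟨(Finset.univ.erase i).centroid ℝ T.affineBasis, ?_, fun m hm => ?_⟩
  · exact T.affineBasis.coord_apply_combination_of_notMem (Finset.notMem_erase i _)
      (Finset.sum_centroidWeights_eq_one_of_card_ne_zero ℝ _ (by simp [hcard]))
  · rw [bary, T.affineBasis.coord_apply_centroid (Finset.mem_erase.2 ⟨hm, Finset.mem_univ m⟩),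
      hcard]
    norm_num

lemma vtx_mem_closure_faceInterior (hij : i ≠ j) : T.vtx j ∈ closure (T.faceInterior i) := by
  obtain ⟨c, hci, hc⟩ := T.faceInterior_nonempty i
  refine closure_mono ?_ (segment_subset_closure_openSegment (left_mem_segment ℝ (T.vtx j) c))
  rintro _ ⟨s, t, hs, ht, hst, rfl⟩
  refine ⟨?_, fun m hm => ?_⟩
  · rw [Convex.combo_affine_apply hst, bary_vtx, if_neg hij, hci, smul_zero, smul_zero, add_zero]
  · have hvtx : 0 ≤ T.bary m (T.vtx j) := by rw [bary_vtx]; split_ifs <;> norm_num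
    rw [Convex.combo_affine_apply hst, smul_eq_mul, smul_eq_mul]
    exact add_pos_of_nonneg_of_pos (mul_nonneg hs.le hvtx) (mul_pos ht (hc m hm))

lemma cross3_grad3_bary_vtx_eq_zero (hr : Differentiable ℝ r)
    (hcurl : ∀ x ∈ T.faceInterior i, curl3 (fun y => T.bubble y • r y) x = 0) (hij : i ≠ j) :
    cross3 (grad3 (T.bary i) (T.vtx j)) (r (T.vtx j)) = 0 := by
  have hclosed : IsClosed {x | cross3 (grad3 (T.bary i) x) (r x) = 0} := by
    simp only [grad3_affineMap, cross3_eq_crossProduct]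
    exact isClosed_eq ((LinearMap.continuous_of_finiteDimensional _).comp hr.continuous)
      continuous_const
  refine closure_minimal (fun x hx => ?_) hclosed (vtx_mem_closure_faceInterior hij)
  have h := hcurl x hx
  rw [curl3_bubble_smul_of_bary_eq_zero (hr x) hx.1] at h
  exact (smul_eq_zero.1 h).resolve_left
    (Finset.prod_pos fun m hm => hx.2 m (Finset.ne_of_mem_erase hm)).ne'

lemma eq_zero_of_curl3_bubble_smul_eq_zero (hr : VPolyDeg 1 r)
    (hcurl : ∀ i, ∀ x ∈ T.faceInterior i, curl3 (fun y => T.bubble y • r y) x = 0) : r = 0 := by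
  refine hr.eq_zero_of_forall_vtx T fun j => ?_
  obtain ⟨i, hij⟩ := exists_ne j
  obtain ⟨k, hkj, hki⟩ := exists_ne_and_ne j i
  have hcross {m : Fin 4} (hm : m ≠ j) :=
    cross3_grad3_bary_vtx_eq_zero hr.differentiable (hcurl m) hm
  refine eq_zero_of_cross3_eq_zero (w := T.vtx k - T.vtx j) (hcross hij) (hcross hkj)
    (T.grad3_bary_ne_zero i _) ?_ ?_ <;>
  simp [dot3_grad3_affineMap, bary_vtx, hij, hkj, hki.symm]

lemma cross3_id_eq_zero_of_curl3_add_eq_zero {p : Vec → Vec} (hp : VPolyDeg 1 p)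
    (hr : Differentiable ℝ r)
    (hcurl : ∀ j, curl3 (fun y => cross3 y (p y) + T.bubble y • r y) (T.vtx j) = 0) :
    (fun x => cross3 x (p x)) = 0 := by
  have hdiff := hp.cross3_id.differentiable
  refine eq_zero_of_curl3_eq_zero_of_dot3_eq_zero hdiff
    (congrFun <| hp.cross3_id.curl3.eq_zero_of_forall_vtx T fun j => ?_)
    fun x => dot3_self_cross3 x (p x)
  have h := hcurl j
  rwa [curl3_add (hdiff _) ((T.differentiable_bubble _).fun_smul (hr _)),
    curl3_bubble_smul_vtx (hr _), add_zero] at h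

end Tetra

end Tetrahedra

theorem statement1_general (k : ℕ) (T : Tetra) {S : Set Vec} (hS : ∀ i, T.face i ⊆ S) :
    {v : Vec → Vec | MemW k T v ∧ ∀ x ∈ S, curl3 v x = 0}
      = {v : Vec → Vec | ∃ q, PolyDeg (k + 1) q ∧ ∀ x, v x = grad3 q x} := by
  have curl3_grad3_eq_zero {q : Vec → ℝ} (hq : PolyDeg (k + 1) q) (x : Vec) :
      curl3 (grad3 q) x = 0 := curl3_grad3 hq.contDiff.contDiffAt
  ext v
  constructor
  · rintro ⟨⟨q, p, r, b, hb, hq, hp, hr, hv⟩, hcurl⟩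
    obtain rfl := Tetra.isBubble_iff.1 hb
    obtain rfl : v = fun x => grad3 q x + (cross3 x (p x) + T.bubble x • r x) :=
      funext fun x => (hv x).trans (add_assoc _ _ _)
    have hrest : ∀ x ∈ S, curl3 (fun y => cross3 y (p y) + T.bubble y • r y) x = 0 := by
      intro x hx
      have h := hcurl x hx
      rwa [curl3_add (VPolyDeg.grad3 hq).differentiable.differentiableAt
        ((hp.cross3_id.differentiable x).fun_add ((T.differentiable_bubble x).fun_smul
          (hr.differentiable x))), curl3_grad3_eq_zero hq, zero_add] at h
    have hcross := Tetra.cross3_id_eq_zero_of_curl3_add_eq_zero hp hr.differentiable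
      fun j => hrest _ ((exists_ne j).elim fun i hi => hS i (T.vtx_mem_face hi.symm))
    have hr₀ : r = 0 := Tetra.eq_zero_of_curl3_bubble_smul_eq_zero hr fun i x hx => by
      simpa [congrFun hcross] using hrest x (hS i (T.faceInterior_subset_face i hx))
    exact ⟨q, hq, fun x => by simp [congrFun hcross, hr₀]⟩
  · rintro ⟨q, hq, hv⟩
    have hzero : VPolyDeg 1 0 := fun _ => ⟨0, by simp, by simp⟩
    obtain rfl : v = grad3 q := funext hv
    exact ⟨⟨q, 0, 0, T.bubble, Tetra.isBubble_iff.2 rfl, hq, hzero, hzero,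
      fun x => by simp [cross3_eq_crossProduct]⟩, fun x _ => curl3_grad3_eq_zero hq x⟩

/-- For `k = 1,2` and a tetrahedron `K`, the kernel of `curl` in
`W_k(K) = ∇P_{k+1}(K) ⊕ x × P₁(K;ℝ³) ⊕ b_K·P₁(K;ℝ³)` is exactly `∇P_{k+1}(K)`. -/
theorem statement1 (k : ℕ) (hk : k = 1 ∨ k = 2) (T : Tetra) :
    {v : Vec → Vec | MemW k T v ∧ ∀ x ∈ T.K, curl3 v x = 0}
      = {v : Vec → Vec | ∃ q, PolyDeg (k + 1) q ∧ ∀ x, v x = grad3 q x} :=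
  statement1_general k T fun _ => convexHull_mono (Set.image_subset_range _ _)
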